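/- arXiv:2212.12900 — 15 statements merged into one kernel-verified Lean document; each statement's English description precedes it below -/
import Mathlib

section
/- Let $R_1$ be a commutative local ring with unity and let $a_1, a_2 \in R_1$ satisfy $a_1 \notin R_1 a_2$ and $a_2 \notin R_1 a_1$ (as happens when the maximal ideal of $R_1$ is not principal and $a_1, a_2$ are part of a minimal generating set). Let $F_2, F_3$ be fields. Then $\Gamma_r(R_1 \times F_2 \times F_3)$ contains $K_{5,5}$ as a subgraph, with parts $X = \{(a_1)\times F_2 \times F_3,\ (a_1+a_2)\times(0)\times F_3,\ (a_1)\times(0)\times F_3,\ (a_1)\times F_2\times(0),\ (a_1)\times(0)\times(0)\}$ and $Y = \{(a_2)\times F_2\times F_3,\ (a_1+a_2)\times F_2\times(0),\ (a_2)\times(0)\times F_3,\ (a_2)\times F_2\times(0),\ (a_2)\times(0)\times(0)\}$. -/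
/-- Adjacency in the reduced cozero-divisor graph `Γ_r(R)`:
the two ideals are nontrivial principal ideals (vertices of the graph),
they are distinct, and neither is properly contained in the other. -/
def redCozeroAdj {R : Type*} [CommRing R] (I J : Ideal R) : Prop :=
  (I.IsPrincipal ∧ I ≠ ⊥ ∧ I ≠ ⊤) ∧ (J.IsPrincipal ∧ J ≠ ⊥ ∧ J ≠ ⊤) ∧
    I ≠ J ∧ ¬ I < J ∧ ¬ J < I

theorem not_dvd_aux {R : Type*} [CommRing R] [IsLocalRing R] (a b : R)
    (h₁ : ¬ b ∣ a) (h₂ : ¬ a ∣ b) : ¬ (a + b) ∣ b := by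
  rintro ⟨r, hr⟩
  rcases IsLocalRing.isUnit_or_isUnit_one_sub_self r with h | h
  · apply h₁
    rw [← h.dvd_mul_right]
    exact ⟨1 - r, by linear_combination -hr⟩
  · apply h₂
    rw [← h.dvd_mul_right]
    exact ⟨r, by linear_combination hr⟩

/-- Let `R₁` be a commutative local ring and `a₁ a₂ ∈ R₁` with `a₁ ∉ R₁a₂` and
`a₂ ∉ R₁a₁`, and let `F₂`, `F₃` be fields.  Then `Γ_r(R₁ × F₂ × F₃)` contains
`K_{5,5}` as a subgraph with the indicated parts `X` and `Y`. -/
theorem stmt1 (R₁ F₂ F₃ : Type*) [CommRing R₁] [IsLocalRing R₁] [Field F₂] [Field F₃]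
    (a₁ a₂ : R₁) (h₁ : a₁ ∉ Ideal.span {a₂}) (h₂ : a₂ ∉ Ideal.span {a₁})
    (X Y : Fin 5 → Ideal (R₁ × F₂ × F₃))
    (hX : X = ![Ideal.span {(a₁, (1 : F₂), (1 : F₃))},
                Ideal.span {(a₁ + a₂, (0 : F₂), (1 : F₃))},
                Ideal.span {(a₁, (0 : F₂), (1 : F₃))},
                Ideal.span {(a₁, (1 : F₂), (0 : F₃))},
                Ideal.span {(a₁, (0 : F₂), (0 : F₃))}])
    (hY : Y = ![Ideal.span {(a₂, (1 : F₂), (1 : F₃))},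
                Ideal.span {(a₁ + a₂, (1 : F₂), (0 : F₃))},
                Ideal.span {(a₂, (0 : F₂), (1 : F₃))},
                Ideal.span {(a₂, (1 : F₂), (0 : F₃))},
                Ideal.span {(a₂, (0 : F₂), (0 : F₃))}]) :
    Function.Injective X ∧ Function.Injective Y ∧ (∀ i j, X i ≠ Y j) ∧
      ∀ i j, redCozeroAdj (X i) (Y j) := by
  rw [Ideal.mem_span_singleton] at h₁ h₂
  have e1 := not_dvd_aux a₁ a₂ h₁ h₂
  have e2 : ¬ (a₁ + a₂) ∣ a₁ := by
    rw [add_comm]; exact not_dvd_aux a₂ a₁ h₂ h₁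
  have e3 : ¬ a₁ ∣ a₁ + a₂ := by simpa using h₂
  have e4 : ¬ a₂ ∣ a₁ + a₂ := by simpa using h₁
  have z1 : a₁ ≠ 0 := by rintro rfl; simp at h₁
  have z2 : a₂ ≠ 0 := by rintro rfl; simp at h₂
  have u1 : ¬ IsUnit a₁ := fun h => h₂ h.dvd
  have u2 : ¬ IsUnit a₂ := fun h => h₁ h.dvd
  have hadj : ∀ i j, ¬ X i ≤ Y j ∧ ¬ Y j ≤ X i := by
    intro i j
    subst hX hY
    fin_cases i <;> fin_cases j <;> simp [Ideal.mem_span_singleton, prod_dvd_iff, h₁, h₂, e1, e2, e3, e4]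
  have hXv : ∀ i, (X i).IsPrincipal ∧ X i ≠ ⊥ ∧ X i ≠ ⊤ := by
    intro i
    subst hX
    refine ⟨?_, ?_, ?_⟩
    · fin_cases i <;> exact ⟨_, rfl⟩
    · fin_cases i <;> simp [z1]
    · fin_cases i <;> simp [Ideal.span_singleton_eq_top, Prod.isUnit_iff, u1]
  have hYv : ∀ i, (Y i).IsPrincipal ∧ Y i ≠ ⊥ ∧ Y i ≠ ⊤ := by
    intro i
    subst hY
    refine ⟨?_, ?_, ?_⟩
    · fin_cases i <;> exact ⟨_, rfl⟩
    · fin_cases i <;> simp [z2]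
    · fin_cases i <;> simp [Ideal.span_singleton_eq_top, Prod.isUnit_iff, u2]
  have hne : ∀ i j, X i ≠ Y j := fun i j h => (hadj i j).1 h.le
  refine ⟨?_, ?_, hne, fun i j => ⟨hXv i, hYv j, hne i j,
    fun h => (hadj i j).1 h.le, fun h => (hadj i j).2 h.le⟩⟩
  · intro i j h
    rw [le_antisymm_iff] at h
    subst hX
    fin_cases i <;> fin_cases j <;> simp [Ideal.mem_span_singleton, prod_dvd_iff, e2, e3] at h ⊢
  · intro i j h
    rw [le_antisymm_iff] at h
    subst hY
    fin_cases i <;> fin_cases j <;> simp [Ideal.mem_span_singleton, prod_dvd_iff, e1, e4] at h ⊢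
end

section
/- Let $R_1, R_2, R_3$ be commutative rings with unity, each of cardinality at least $3$, and choose $u \in R_1 \setminus \{0,1\}$, $v \in R_2 \setminus \{0,1\}$, $w \in R_3 \setminus \{0,1\}$. Then $\Gamma'(R_1 \times R_2 \times R_3)$ contains $K_{5,5}$ as a subgraph, with parts $\{(0,1,0), (0,1,1), (0,1,w), (0,v,0), (0,v,1)\}$ and $\{(1,0,0), (1,0,1), (1,0,w), (u,0,0), (u,0,1)\}$. -/
/-- Adjacency in the cozero-divisor graph `Γ'(R)`: both elements are vertices
(non-zero non-units) and neither lies in the principal ideal generated by the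
other. -/
def cozeroAdj {R : Type*} [CommRing R] (x y : R) : Prop :=
  (x ≠ 0 ∧ ¬ IsUnit x) ∧ (y ≠ 0 ∧ ¬ IsUnit y) ∧
    x ∉ Ideal.span {y} ∧ y ∉ Ideal.span {x}

/-- Let `R₁, R₂, R₃` be commutative rings with unity, each of cardinality at
least `3`, and `u ∈ R₁ \ {0,1}`, `v ∈ R₂ \ {0,1}`, `w ∈ R₃ \ {0,1}`.  Then
`Γ'(R₁ × R₂ × R₃)` contains `K_{5,5}` as a subgraph with the indicated parts. -/
theorem stmt2 (R₁ R₂ R₃ : Type*) [CommRing R₁] [CommRing R₂] [CommRing R₃]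
    (hc₁ : 3 ≤ Cardinal.mk R₁) (hc₂ : 3 ≤ Cardinal.mk R₂) (hc₃ : 3 ≤ Cardinal.mk R₃)
    (u : R₁) (hu0 : u ≠ 0) (hu1 : u ≠ 1)
    (v : R₂) (hv0 : v ≠ 0) (hv1 : v ≠ 1)
    (w : R₃) (hw0 : w ≠ 0) (hw1 : w ≠ 1)
    (A B : Fin 5 → R₁ × R₂ × R₃)
    (hA : A = ![(0, 1, 0), (0, 1, 1), (0, 1, w), (0, v, 0), (0, v, 1)])
    (hB : B = ![(1, 0, 0), (1, 0, 1), (1, 0, w), (u, 0, 0), (u, 0, 1)]) :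
    Function.Injective A ∧ Function.Injective B ∧ (∀ i j, A i ≠ B j) ∧
      ∀ i j, cozeroAdj (A i) (B j) := by
  have : Nontrivial R₁ := ⟨u, 0, hu0⟩
  have : Nontrivial R₂ := ⟨v, 0, hv0⟩
  have : Nontrivial R₃ := ⟨w, 0, hw0⟩
  have hA1 : ∀ i, (A i).1 = 0 ∧ (A i).2.1 ≠ 0 := by
    intro i; subst hA; fin_cases i <;> simp [hv0]
  have hB1 : ∀ i, (B i).1 ≠ 0 ∧ (B i).2.1 = 0 := by
    intro i; subst hB; fin_cases i <;> simp [hu0]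
  refine ⟨?_, ?_, ?_, ?_⟩
  · subst hA
    intro i j h
    fin_cases i <;> fin_cases j <;>
      simp [hv1, hv1.symm, hw0, hw0.symm, hw1, hw1.symm] at h ⊢
  · subst hB
    intro i j h
    fin_cases i <;> fin_cases j <;>
      simp [hu1, hu1.symm, hw0, hw0.symm, hw1, hw1.symm] at h ⊢
  · intro i j h
    exact (hB1 j).1 (h ▸ (hA1 i).1)
  · intro i j
    obtain ⟨a1, a2⟩ := hA1 i
    obtain ⟨b1, b2⟩ := hB1 j
    refine ⟨⟨?_, ?_⟩, ⟨?_, ?_⟩, ?_, ?_⟩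
    · intro h; exact a2 (by simp [h])
    · intro h
      have := (h.map (RingHom.fst R₁ (R₂ × R₃)))
      simp [a1] at this
    · intro h; exact b1 (by simp [h])
    · intro h
      have := (h.map ((RingHom.fst R₂ R₃).comp (RingHom.snd R₁ (R₂ × R₃))))
      simp [b2] at this
    · intro h
      obtain ⟨c, hc⟩ := Ideal.mem_span_singleton.1 h
      exact a2 (by rw [hc]; simp [b2])
    · intro h
      obtain ⟨c, hc⟩ := Ideal.mem_span_singleton.1 h
      exact b1 (by rw [hc]; simp [a1])
end

section
/- Let $R_1, R_2$ be commutative rings with unity with $|R_1| \geq 4$ and $|R_2| \geq 3$, and choose distinct $u_1, u_2 \in R_1 \setminus \{0,1\}$ and $v \in R_2 \setminus \{0,1\}$. Then $\Gamma'(R_1 \times R_2 \times \mathbb{Z}_2)$ contains $K_{8,4}$ as a subgraph, with parts $\{(0,1,0), (1,1,0), (u_1,1,0), (u_2,1,0), (0,v,0), (1,v,0), (u_1,v,0), (u_2,v,0)\}$ and $\{(0,0,1), (1,0,1), (u_1,0,1), (u_2,0,1)\}$. -/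
theorem cozeroAdj_aux {R₁ R₂ : Type*} [CommRing R₁] [CommRing R₂] [Nontrivial R₂]
    (a b : R₁) (w : R₂) (hw : w ≠ 0) :
    cozeroAdj ((a, w, 0) : R₁ × R₂ × ZMod 2) (b, 0, 1) := by
  refine ⟨⟨?_, ?_⟩, ⟨?_, ?_⟩, ?_, ?_⟩
  · intro h
    simp [Prod.ext_iff] at h
    exact hw h.2
  · intro h
    simp [Prod.isUnit_iff] at h
  · intro h
    simp [Prod.ext_iff] at h
  · intro h
    simp [Prod.isUnit_iff] at h
  · rw [Ideal.mem_span_singleton']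
    rintro ⟨c, hc⟩
    simp [Prod.ext_iff] at hc
    exact hw hc.2.1.symm
  · rw [Ideal.mem_span_singleton']
    rintro ⟨c, hc⟩
    simp [Prod.ext_iff] at hc

/-- Let `R₁, R₂` be commutative rings with unity with `|R₁| ≥ 4`, `|R₂| ≥ 3`,
distinct `u₁, u₂ ∈ R₁ \ {0,1}` and `v ∈ R₂ \ {0,1}`.  Then
`Γ'(R₁ × R₂ × ℤ₂)` contains `K_{8,4}` as a subgraph with the indicated parts. -/
theorem stmt3 (R₁ R₂ : Type*) [CommRing R₁] [CommRing R₂]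
    (hc₁ : 4 ≤ Cardinal.mk R₁) (hc₂ : 3 ≤ Cardinal.mk R₂)
    (u₁ u₂ : R₁) (hu₁0 : u₁ ≠ 0) (hu₁1 : u₁ ≠ 1) (hu₂0 : u₂ ≠ 0) (hu₂1 : u₂ ≠ 1)
    (hu : u₁ ≠ u₂)
    (v : R₂) (hv0 : v ≠ 0) (hv1 : v ≠ 1)
    (A : Fin 8 → R₁ × R₂ × ZMod 2) (B : Fin 4 → R₁ × R₂ × ZMod 2)
    (hA : A = ![(0, 1, 0), (1, 1, 0), (u₁, 1, 0), (u₂, 1, 0),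
                (0, v, 0), (1, v, 0), (u₁, v, 0), (u₂, v, 0)])
    (hB : B = ![(0, 0, 1), (1, 0, 1), (u₁, 0, 1), (u₂, 0, 1)]) :
    Function.Injective A ∧ Function.Injective B ∧ (∀ i j, A i ≠ B j) ∧
      ∀ i j, cozeroAdj (A i) (B j) := by
  haveI : Nontrivial R₂ := ⟨v, 0, hv0⟩
  have h01 : (1 : R₁) ≠ 0 := by
    intro h
    exact hu₁0 (by rw [← mul_one u₁, h, mul_zero])
  have hadj : ∀ i j, cozeroAdj (A i) (B j) := by
    subst hA hB
    intro i j
    fin_cases i <;> fin_cases j <;>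
      first
        | exact cozeroAdj_aux _ _ 1 one_ne_zero
        | exact cozeroAdj_aux _ _ v hv0
  refine ⟨?_, ?_, ?_, hadj⟩
  · subst hA
    intro i j h
    fin_cases i <;> fin_cases j <;>
      simp_all [Prod.ext_iff, eq_comm]
  · subst hB
    intro i j h
    fin_cases i <;> fin_cases j <;>
      simp_all [Prod.ext_iff, eq_comm]
  · intro i j h
    have h2 := (hadj i j).2.2.1
    rw [h] at h2
    exact h2 (Ideal.mem_span_singleton_self _)
end

section
/- Let $R_1$ be a commutative ring with unity with $|R_1| \geq 5$, and choose distinct elements $u_1, u_2, u_3 \in R_1 \setminus \{0,1\}$. Then $\Gamma'(R_1 \times \mathbb{Z}_2 \times \mathbb{Z}_2)$ contains $K_{5,5}$ as a subgraph, with parts $\{(0,1,0), (u_1,1,0), (u_2,1,0), (u_3,1,0), (1,1,0)\}$ and $\{(0,0,1), (u_1,0,1), (u_2,0,1), (u_3,0,1), (1,0,1)\}$. -/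
theorem cozero_aux {R : Type*} [CommRing R] (a b : R) :
    cozeroAdj ((a, 1, 0) : R × ZMod 2 × ZMod 2) (b, 0, 1) := by
  refine ⟨⟨?_, ?_⟩, ⟨?_, ?_⟩, ?_, ?_⟩
  · intro h; simp [Prod.ext_iff] at h
  · intro h; simp [Prod.isUnit_iff] at h
  · intro h; simp [Prod.ext_iff] at h
  · intro h; simp [Prod.isUnit_iff] at h
  · intro h
    obtain ⟨c, hc⟩ := Ideal.mem_span_singleton'.1 h
    simp [Prod.ext_iff] at hc
  · intro h
    obtain ⟨c, hc⟩ := Ideal.mem_span_singleton'.1 h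
    simp [Prod.ext_iff] at hc

/-- Let `R₁` be a commutative ring with unity with `|R₁| ≥ 5` and distinct
`u₁, u₂, u₃ ∈ R₁ \ {0,1}`.  Then `Γ'(R₁ × ℤ₂ × ℤ₂)` contains `K_{5,5}` as a
subgraph with the indicated parts. -/
theorem stmt4 (R₁ : Type*) [CommRing R₁] (hc : 5 ≤ Cardinal.mk R₁)
    (u₁ u₂ u₃ : R₁)
    (hu₁0 : u₁ ≠ 0) (hu₁1 : u₁ ≠ 1) (hu₂0 : u₂ ≠ 0) (hu₂1 : u₂ ≠ 1)
    (hu₃0 : u₃ ≠ 0) (hu₃1 : u₃ ≠ 1)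
    (h12 : u₁ ≠ u₂) (h13 : u₁ ≠ u₃) (h23 : u₂ ≠ u₃)
    (A B : Fin 5 → R₁ × ZMod 2 × ZMod 2)
    (hA : A = ![(0, 1, 0), (u₁, 1, 0), (u₂, 1, 0), (u₃, 1, 0), (1, 1, 0)])
    (hB : B = ![(0, 0, 1), (u₁, 0, 1), (u₂, 0, 1), (u₃, 0, 1), (1, 0, 1)]) :
    Function.Injective A ∧ Function.Injective B ∧ (∀ i j, A i ≠ B j) ∧
      ∀ i j, cozeroAdj (A i) (B j) := by
  have h01 : (0 : R₁) ≠ 1 := fun h => hu₁0 (by rw [← mul_one u₁, ← h, mul_zero])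
  have hA' : ∀ i, A i = (![0, u₁, u₂, u₃, 1] i, 1, 0) := by
    intro i; subst hA; fin_cases i <;> rfl
  have hB' : ∀ i, B i = (![0, u₁, u₂, u₃, 1] i, 0, 1) := by
    intro i; subst hB; fin_cases i <;> rfl
  have hinj : Function.Injective ![0, u₁, u₂, u₃, 1] := by
    intro i j h
    fin_cases i <;> fin_cases j <;> simp at h ⊢ <;> first | exact absurd h (by assumption) | exact absurd h.symm (by assumption)
  refine ⟨?_, ?_, ?_, ?_⟩
  · intro i j h
    rw [hA', hA'] at h
    exact hinj (Prod.ext_iff.1 h).1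
  · intro i j h
    rw [hB', hB'] at h
    exact hinj (Prod.ext_iff.1 h).1
  · intro i j h
    rw [hA', hB'] at h
    simp [Prod.ext_iff] at h
  · intro i j
    rw [hA', hB']
    exact cozero_aux _ _
end

section
/- Let $R_1$ be a commutative ring with unity of cardinality $4$, and let $u_1, u_2$ be the two distinct elements of $R_1 \setminus \{0,1\}$. Then $\Gamma'(R_1 \times \mathbb{Z}_2 \times \mathbb{Z}_2)$ contains $K_{3,3}$ as a subgraph, with parts $\{(0,1,1), (u_1,0,1), (u_2,0,1)\}$ and $\{(u_1,1,0), (u_2,1,0), (1,1,0)\}$. -/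
/-- Let `R₁` be a commutative ring with unity of cardinality `4` and let
`u₁, u₂` be the two distinct elements of `R₁ \ {0,1}`.  Then
`Γ'(R₁ × ℤ₂ × ℤ₂)` contains `K_{3,3}` as a subgraph with the indicated parts. -/
theorem stmt5 (R₁ : Type*) [CommRing R₁] (hc : Nat.card R₁ = 4)
    (u₁ u₂ : R₁)
    (hu₁0 : u₁ ≠ 0) (hu₁1 : u₁ ≠ 1) (hu₂0 : u₂ ≠ 0) (hu₂1 : u₂ ≠ 1)
    (hu : u₁ ≠ u₂)
    (A B : Fin 3 → R₁ × ZMod 2 × ZMod 2)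
    (hA : A = ![(0, 1, 1), (u₁, 0, 1), (u₂, 0, 1)])
    (hB : B = ![(u₁, 1, 0), (u₂, 1, 0), (1, 1, 0)]) :
    Function.Injective A ∧ Function.Injective B ∧ (∀ i j, A i ≠ B j) ∧
      ∀ i j, cozeroAdj (A i) (B j) := by
  have h01 : (0 : R₁) ≠ 1 := by
    intro h
    exact hu₁0 (by rw [← mul_one u₁, ← h, mul_zero])
  have z : (0 : ZMod 2) ≠ 1 := by decide
  subst hA hB
  refine ⟨?_, ?_, ?_, ?_⟩
  · intro i j h
    fin_cases i <;> fin_cases j <;> simp_all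
  · intro i j h
    fin_cases i <;> fin_cases j <;> simp_all
  · intro i j h
    fin_cases i <;> fin_cases j <;> simp_all
  · intro i j
    fin_cases i <;> fin_cases j <;>
      simp [cozeroAdj, Ideal.mem_span_singleton', Prod.ext_iff, Prod.isUnit_iff, hu₁0, hu₂0, hu₁0.symm, hu₂0.symm,
        h01, h01.symm]
end

section
/- Let $R_1, R_2$ be commutative local rings with unity such that $R_1$ has two distinct units $u_1, u_2$ and a non-zero element $a$ of its maximal ideal, and $R_2$ has four distinct units $v_1, v_2, v_3, v_4$ and two distinct non-zero elements $b_1, b_2$ of its maximal ideal. Then $\Gamma'(R_1 \times R_2)$ contains $K_{8,4}$ as a subgraph, with parts $\{(u_1,0), (u_2,0), (a,0), (a,b_1), (a,b_2), (u_1,b_1), (u_1,b_2), (u_2,b_1)\}$ and $\{(0,v_1), (0,v_2), (0,v_3), (0,v_4)\}$. -/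
theorem cozeroAdj_aux_s6 {R₁ R₂ : Type*} [CommRing R₁] [CommRing R₂]
    [IsLocalRing R₁] [IsLocalRing R₂] (p q : R₁ × R₂)
    (hx : p.1 ≠ 0) (hy : p.2 ∈ IsLocalRing.maximalIdeal R₂) (hq : q.1 = 0) (hv : IsUnit q.2) :
    cozeroAdj p q := by
  obtain ⟨x, y⟩ := p
  obtain ⟨z, v⟩ := q
  dsimp only at hx hy hq hv
  subst hq
  have hy' : ¬ IsUnit y := (IsLocalRing.mem_maximalIdeal y).1 hy
  refine ⟨⟨fun h => hx (Prod.ext_iff.1 h).1, fun h => hy' (Prod.isUnit_iff.1 h).2⟩,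
    ⟨fun h => hv.ne_zero (Prod.ext_iff.1 h).2, fun h => not_isUnit_zero (Prod.isUnit_iff.1 h).1⟩,
    fun h => ?_, fun h => ?_⟩
  · obtain ⟨c, hc⟩ := Ideal.mem_span_singleton.1 h
    have := (Prod.ext_iff.1 hc).1
    simp at this
    exact hx this
  · obtain ⟨c, hc⟩ := Ideal.mem_span_singleton.1 h
    have h2 : v = y * c.2 := (Prod.ext_iff.1 hc).2
    rw [h2] at hv
    exact hy' (isUnit_of_mul_isUnit_left hv)

/-- Let `R₁, R₂` be commutative local rings, `u₁ ≠ u₂` units of `R₁`,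
`a ≠ 0` in the maximal ideal of `R₁`, `v₁, …, v₄` distinct units of `R₂`, and
`b₁ ≠ b₂` non-zero elements of the maximal ideal of `R₂`.  Then
`Γ'(R₁ × R₂)` contains `K_{8,4}` as a subgraph with the indicated parts. -/
theorem stmt6 (R₁ R₂ : Type*) [CommRing R₁] [CommRing R₂]
    [IsLocalRing R₁] [IsLocalRing R₂]
    (u₁ u₂ : R₁) (hu₁ : IsUnit u₁) (hu₂ : IsUnit u₂) (hu : u₁ ≠ u₂)
    (a : R₁) (ha : a ∈ IsLocalRing.maximalIdeal R₁) (ha0 : a ≠ 0)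
    (v₁ v₂ v₃ v₄ : R₂) (hv₁ : IsUnit v₁) (hv₂ : IsUnit v₂) (hv₃ : IsUnit v₃)
    (hv₄ : IsUnit v₄) (hv : ([v₁, v₂, v₃, v₄] : List R₂).Pairwise (· ≠ ·))
    (b₁ b₂ : R₂) (hb₁ : b₁ ∈ IsLocalRing.maximalIdeal R₂)
    (hb₂ : b₂ ∈ IsLocalRing.maximalIdeal R₂)
    (hb₁0 : b₁ ≠ 0) (hb₂0 : b₂ ≠ 0) (hb : b₁ ≠ b₂)
    (A : Fin 8 → R₁ × R₂) (B : Fin 4 → R₁ × R₂)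
    (hA : A = ![(u₁, 0), (u₂, 0), (a, 0), (a, b₁), (a, b₂), (u₁, b₁), (u₁, b₂), (u₂, b₁)])
    (hB : B = ![(0, v₁), (0, v₂), (0, v₃), (0, v₄)]) :
    Function.Injective A ∧ Function.Injective B ∧ (∀ i j, A i ≠ B j) ∧
      ∀ i j, cozeroAdj (A i) (B j) := by
  have hu₁0 := hu₁.ne_zero
  have hu₂0 := hu₂.ne_zero
  have hau₁ : a ≠ u₁ := fun h => (IsLocalRing.mem_maximalIdeal a).1 ha (h ▸ hu₁)
  have hau₂ : a ≠ u₂ := fun h => (IsLocalRing.mem_maximalIdeal a).1 ha (h ▸ hu₂)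
  have hA1 : ∀ i, (A i).1 ≠ 0 := by
    intro i
    subst hA
    fin_cases i <;> assumption
  have hA2 : ∀ i, (A i).2 ∈ IsLocalRing.maximalIdeal R₂ := by
    intro i
    subst hA
    fin_cases i <;> first | assumption | exact Ideal.zero_mem _
  have hB1 : ∀ j, (B j).1 = 0 := by
    intro j
    subst hB
    fin_cases j <;> rfl
  have hB2 : ∀ j, IsUnit (B j).2 := by
    intro j
    subst hB
    fin_cases j <;> assumption
  refine ⟨?_, ?_, fun i j h => hA1 i (by rw [h, hB1]), fun i j =>
    cozeroAdj_aux_s6 _ _ (hA1 i) (hA2 i) (hB1 j) (hB2 j)⟩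
  · clear hA1 hA2 hB1 hB2 hB hv
    subst hA
    intro i j h
    fin_cases i <;> fin_cases j <;>
      first
      | rfl
      | (exfalso
         simp [hu, hu.symm, hau₁, hau₂, hau₁.symm, hau₂.symm, hb, hb.symm, hb₁0, hb₂0,
           hb₁0.symm, hb₂0.symm] at h)
  · clear hA1 hA2 hB1 hB2 hA
    subst hB
    simp only [List.pairwise_cons, List.mem_cons] at hv
    intro i j h
    fin_cases i <;> fin_cases j <;> first | rfl | (exfalso; simp at h; simp [h] at hv)
end

section
/- Let $R_1$ be a commutative local ring with unity having five distinct units $u_1, \ldots, u_5$ and two distinct non-zero elements $a, b$ of its maximal ideal, and let $F$ be a field with $|F| \geq 3$, with distinct units $v_1, v_2$. Then $\Gamma'(R_1 \times F)$ contains $K_{5,5}$ as a subgraph, with parts $\{(u_1,0), (u_2,0), (u_3,0), (u_4,0), (u_5,0)\}$ and $\{(0,v_1), (0,v_2), (a,v_1), (a,v_2), (b,v_1)\}$. -/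
theorem cozero_key {R F : Type*} [CommRing R] [Nontrivial R] [Field F] {u c : R} {v : F}
    (hu : IsUnit u) (hc : ¬ IsUnit c) (hv : IsUnit v) :
    cozeroAdj ((u, 0) : R × F) (c, v) := by
  have h1 : ((u, 0) : R × F) ∉ Ideal.span {((c, v) : R × F)} := by
    rw [Ideal.mem_span_singleton]
    rintro ⟨⟨x, y⟩, h⟩
    have h' : u = c * x := congrArg Prod.fst h
    exact hc (isUnit_of_mul_isUnit_left (h' ▸ hu))
  have h2 : ((c, v) : R × F) ∉ Ideal.span {((u, 0) : R × F)} := by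
    rw [Ideal.mem_span_singleton]
    rintro ⟨⟨x, y⟩, h⟩
    have h' : v = 0 * y := congrArg Prod.snd h
    exact hv.ne_zero (by simpa using h')
  refine ⟨⟨fun h => hu.ne_zero (congrArg Prod.fst h), fun h => ?_⟩,
    ⟨fun h => hv.ne_zero (congrArg Prod.snd h), fun h => ?_⟩, h1, h2⟩
  · exact (Prod.isUnit_iff.1 h).2.ne_zero rfl
  · exact hc (Prod.isUnit_iff.1 h).1

/-- Let `R₁` be a commutative local ring with five distinct units
`u₁, …, u₅` and two distinct non-zero elements `a, b` of its maximal ideal,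
and let `F` be a field with `|F| ≥ 3` and distinct units `v₁, v₂`.  Then
`Γ'(R₁ × F)` contains `K_{5,5}` as a subgraph with the indicated parts. -/
theorem stmt7 (R₁ F : Type*) [CommRing R₁] [IsLocalRing R₁] [Field F]
    (u₁ u₂ u₃ u₄ u₅ : R₁)
    (hu₁ : IsUnit u₁) (hu₂ : IsUnit u₂) (hu₃ : IsUnit u₃) (hu₄ : IsUnit u₄)
    (hu₅ : IsUnit u₅) (hu : ([u₁, u₂, u₃, u₄, u₅] : List R₁).Pairwise (· ≠ ·))
    (a b : R₁) (ha : a ∈ IsLocalRing.maximalIdeal R₁)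
    (hb : b ∈ IsLocalRing.maximalIdeal R₁) (ha0 : a ≠ 0) (hb0 : b ≠ 0) (hab : a ≠ b)
    (hF : 3 ≤ Cardinal.mk F)
    (v₁ v₂ : F) (hv₁ : IsUnit v₁) (hv₂ : IsUnit v₂) (hv : v₁ ≠ v₂)
    (A B : Fin 5 → R₁ × F)
    (hA : A = ![(u₁, 0), (u₂, 0), (u₃, 0), (u₄, 0), (u₅, 0)])
    (hB : B = ![(0, v₁), (0, v₂), (a, v₁), (a, v₂), (b, v₁)]) :
    Function.Injective A ∧ Function.Injective B ∧ (∀ i j, A i ≠ B j) ∧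
      ∀ i j, cozeroAdj (A i) (B j) := by
  have key : ∀ i j, cozeroAdj (A i) (B j) := by
    have hA' : ∀ i, ∃ u, IsUnit u ∧ A i = (u, 0) := by
      intro i
      subst hA
      fin_cases i
      · exact ⟨u₁, hu₁, rfl⟩
      · exact ⟨u₂, hu₂, rfl⟩
      · exact ⟨u₃, hu₃, rfl⟩
      · exact ⟨u₄, hu₄, rfl⟩
      · exact ⟨u₅, hu₅, rfl⟩
    have hB' : ∀ j, ∃ c v, ¬ IsUnit c ∧ IsUnit v ∧ B j = (c, v) := by
      have ha' : ¬ IsUnit a := ha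
      have hb' : ¬ IsUnit b := hb
      intro j
      subst hB
      fin_cases j
      · exact ⟨0, v₁, not_isUnit_zero, hv₁, rfl⟩
      · exact ⟨0, v₂, not_isUnit_zero, hv₂, rfl⟩
      · exact ⟨a, v₁, ha', hv₁, rfl⟩
      · exact ⟨a, v₂, ha', hv₂, rfl⟩
      · exact ⟨b, v₁, hb', hv₁, rfl⟩
    intro i j
    obtain ⟨u, h, e⟩ := hA' i
    obtain ⟨c, v, h1, h2, e'⟩ := hB' j
    rw [e, e']
    exact cozero_key h h1 h2
  refine ⟨?_, ?_, fun i j h => ?_, key⟩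
  · subst hA
    simp only [List.pairwise_cons, List.mem_cons, List.not_mem_nil] at hu
    intro i j h
    fin_cases i <;> fin_cases j <;> simp at h ⊢ <;> grind
  · subst hB
    intro i j h
    fin_cases i <;> fin_cases j <;> simp at h ⊢ <;> grind
  · have := (key i j).2.2.1
    rw [h] at this
    exact this (Ideal.mem_span_singleton_self _)
end

section
/- Let $R_1$ be a commutative local ring with unity having four distinct units $u_1, u_2, u_3, u_4$ and three distinct non-zero elements $a, b, c$ of its maximal ideal, and let $F$ be a field with $|F| \geq 3$, with distinct units $v_1, v_2$. Then $\Gamma'(R_1 \times F)$ contains $K_{4,8}$ as a subgraph, with parts $\{(u_1,0), (u_2,0), (u_3,0), (u_4,0)\}$ and $\{(0,v_1), (0,v_2), (a,v_1), (a,v_2), (b,v_1), (b,v_2), (c,v_1), (c,v_2)\}$. -/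
/-- Let `R₁` be a commutative local ring with four distinct units
`u₁, …, u₄` and three distinct non-zero elements `a, b, c` of its maximal
ideal, and let `F` be a field with `|F| ≥ 3` and distinct units `v₁, v₂`.
Then `Γ'(R₁ × F)` contains `K_{4,8}` as a subgraph with the indicated parts. -/
theorem stmt8 (R₁ F : Type*) [CommRing R₁] [IsLocalRing R₁] [Field F]
    (u₁ u₂ u₃ u₄ : R₁)
    (hu₁ : IsUnit u₁) (hu₂ : IsUnit u₂) (hu₃ : IsUnit u₃) (hu₄ : IsUnit u₄)
    (hu : ([u₁, u₂, u₃, u₄] : List R₁).Pairwise (· ≠ ·))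
    (a b c : R₁) (ha : a ∈ IsLocalRing.maximalIdeal R₁)
    (hb : b ∈ IsLocalRing.maximalIdeal R₁) (hc : c ∈ IsLocalRing.maximalIdeal R₁)
    (ha0 : a ≠ 0) (hb0 : b ≠ 0) (hc0 : c ≠ 0)
    (habc : ([a, b, c] : List R₁).Pairwise (· ≠ ·))
    (hF : 3 ≤ Cardinal.mk F)
    (v₁ v₂ : F) (hv₁ : IsUnit v₁) (hv₂ : IsUnit v₂) (hv : v₁ ≠ v₂)
    (A : Fin 4 → R₁ × F) (B : Fin 8 → R₁ × F)
    (hA : A = ![(u₁, 0), (u₂, 0), (u₃, 0), (u₄, 0)])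
    (hB : B = ![(0, v₁), (0, v₂), (a, v₁), (a, v₂), (b, v₁), (b, v₂), (c, v₁), (c, v₂)]) :
    Function.Injective A ∧ Function.Injective B ∧ (∀ i j, A i ≠ B j) ∧
      ∀ i j, cozeroAdj (A i) (B j) := by
  have hadj : ∀ (u m : R₁) (v : F), IsUnit u → m ∈ IsLocalRing.maximalIdeal R₁ → IsUnit v →
      cozeroAdj ((u, 0) : R₁ × F) (m, v) := by
    intro u m v hu hm hv
    have hm' : ¬ IsUnit m := (IsLocalRing.mem_maximalIdeal m).1 hm
    refine ⟨⟨?_, ?_⟩, ⟨?_, ?_⟩, ?_, ?_⟩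
    · intro h
      exact hu.ne_zero (congrArg Prod.fst h)
    · intro h
      exact not_isUnit_zero (Prod.isUnit_iff.1 h).2
    · intro h
      exact hv.ne_zero (congrArg Prod.snd h)
    · intro h
      exact hm' (Prod.isUnit_iff.1 h).1
    · intro h
      obtain ⟨r, hr⟩ := Ideal.mem_span_singleton'.1 h
      have h1 : r.1 * m = u := congrArg Prod.fst hr
      rw [← h1] at hu
      exact hm' (isUnit_of_mul_isUnit_right hu)
    · intro h
      obtain ⟨r, hr⟩ := Ideal.mem_span_singleton'.1 h
      have h1 : r.2 * 0 = v := congrArg Prod.snd hr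
      exact hv.ne_zero (by rw [← h1, mul_zero])
  have h0 : (0 : R₁) ∈ IsLocalRing.maximalIdeal R₁ := Ideal.zero_mem _
  have key : ∀ i j, cozeroAdj (A i) (B j) := by
    intro i j
    have hAi : ∃ u, IsUnit u ∧ A i = (u, 0) := by
      subst hA
      fin_cases i
      exacts [⟨u₁, hu₁, rfl⟩, ⟨u₂, hu₂, rfl⟩, ⟨u₃, hu₃, rfl⟩, ⟨u₄, hu₄, rfl⟩]
    have hBj : ∃ m v, m ∈ IsLocalRing.maximalIdeal R₁ ∧ IsUnit v ∧ B j = (m, v) := by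
      subst hB
      fin_cases j
      exacts [⟨0, v₁, h0, hv₁, rfl⟩, ⟨0, v₂, h0, hv₂, rfl⟩, ⟨a, v₁, ha, hv₁, rfl⟩,
        ⟨a, v₂, ha, hv₂, rfl⟩, ⟨b, v₁, hb, hv₁, rfl⟩, ⟨b, v₂, hb, hv₂, rfl⟩,
        ⟨c, v₁, hc, hv₁, rfl⟩, ⟨c, v₂, hc, hv₂, rfl⟩]
    obtain ⟨u, hu, e⟩ := hAi
    obtain ⟨m, v, hm, hv, e'⟩ := hBj
    rw [e, e']
    exact hadj u m v hu hm hv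
  refine ⟨?_, ?_, ?_, key⟩
  · have : (List.ofFn A).Nodup := by
      subst hA
      simp at hu ⊢
      grind
    exact List.nodup_ofFn.1 this
  · have : (List.ofFn B).Nodup := by
      subst hB
      simp at habc ⊢
      grind
    exact List.nodup_ofFn.1 this
  · intro i j h
    have := (key i j).2.2.1
    rw [h] at this
    exact this (Ideal.mem_span_singleton_self _)
end

section
/- Let $R_1$ be a commutative local ring with unity having two distinct units $u_1, u_2$ and a non-zero element $a$ of its maximal ideal, and let $F$ be a field with $|F| \geq 13$, with twelve distinct units $v_1, \ldots, v_{12}$. Then $\Gamma'(R_1 \times F)$ contains $K_{3,12}$ as a subgraph, with parts $\{(u_1,0), (u_2,0), (a,0)\}$ and $\{(0,v_j) : 1 \leq j \leq 12\}$. -/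
/-- Let `R₁` be a commutative local ring with two distinct units `u₁, u₂` and a
non-zero element `a` of its maximal ideal, and let `F` be a field with
`|F| ≥ 13` and twelve distinct units `v₁, …, v₁₂`.  Then `Γ'(R₁ × F)` contains
`K_{3,12}` as a subgraph with the indicated parts. -/
theorem stmt9 (R₁ F : Type*) [CommRing R₁] [IsLocalRing R₁] [Field F]
    (u₁ u₂ : R₁) (hu₁ : IsUnit u₁) (hu₂ : IsUnit u₂) (hu : u₁ ≠ u₂)
    (a : R₁) (ha : a ∈ IsLocalRing.maximalIdeal R₁) (ha0 : a ≠ 0)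
    (hF : 13 ≤ Cardinal.mk F)
    (v : Fin 12 → F) (hv : Function.Injective v) (hvu : ∀ j, IsUnit (v j))
    (A : Fin 3 → R₁ × F) (B : Fin 12 → R₁ × F)
    (hA : A = ![(u₁, 0), (u₂, 0), (a, 0)])
    (hB : B = fun j => ((0 : R₁), v j)) :
    Function.Injective A ∧ Function.Injective B ∧ (∀ i j, A i ≠ B j) ∧
      ∀ i j, cozeroAdj (A i) (B j) := by
  have hna : ¬ IsUnit a := ha
  have h1 : u₁ ≠ a := fun h => hna (h ▸ hu₁)
  have h2 : u₂ ≠ a := fun h => hna (h ▸ hu₂)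
  have key : ∀ (x : R₁) (y : F), x ≠ 0 → y ≠ 0 → cozeroAdj (x, (0 : F)) ((0 : R₁), y) := by
    intro x y hx hy
    refine ⟨⟨?_, ?_⟩, ⟨?_, ?_⟩, ?_, ?_⟩
    · simp [hx]
    · simp [Prod.isUnit_iff]
    · simp [hy]
    · simp [Prod.isUnit_iff]
    · rw [Ideal.mem_span_singleton']
      rintro ⟨c, hc⟩
      have := congrArg Prod.fst hc
      simp at this
      exact hx this.symm
    · rw [Ideal.mem_span_singleton']
      rintro ⟨c, hc⟩
      have := congrArg Prod.snd hc
      simp at this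
      exact hy this.symm
  have hAi : ∀ i, ∃ x : R₁, x ≠ 0 ∧ A i = (x, 0) := by
    intro i
    subst hA
    fin_cases i
    · exact ⟨u₁, hu₁.ne_zero, rfl⟩
    · exact ⟨u₂, hu₂.ne_zero, rfl⟩
    · exact ⟨a, ha0, rfl⟩
  refine ⟨?_, ?_, ?_, ?_⟩
  · subst hA
    intro i j hij
    fin_cases i <;> fin_cases j <;> simp_all [eq_comm]
  · subst hB
    intro i j hij
    exact hv (congrArg Prod.snd hij)
  · intro i j h
    obtain ⟨x, hx, hxA⟩ := hAi i
    rw [hxA, hB] at h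
    exact hx (congrArg Prod.fst h)
  · intro i j
    obtain ⟨x, hx, hxA⟩ := hAi i
    rw [hxA, hB]
    exact key x (v j) hx (hvu j).ne_zero
end

section
/- Let $R_1$ be a commutative local ring with unity having five distinct units $u_1, \ldots, u_5$ and four distinct non-zero elements $a_1, a_2, a_3, a_4$ of its maximal ideal. Then $\Gamma'(R_1 \times \mathbb{Z}_2)$ contains $K_{5,5}$ as a subgraph, with parts $\{(u_1,0), (u_2,0), (u_3,0), (u_4,0), (u_5,0)\}$ and $\{(0,1), (a_1,1), (a_2,1), (a_3,1), (a_4,1)\}$. -/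
/-- Let `R₁` be a commutative local ring with five distinct units `u₁, …, u₅`
and four distinct non-zero elements `a₁, …, a₄` of its maximal ideal.  Then
`Γ'(R₁ × ℤ₂)` contains `K_{5,5}` as a subgraph with the indicated parts. -/
theorem stmt10 (R₁ : Type*) [CommRing R₁] [IsLocalRing R₁]
    (u : Fin 5 → R₁) (hu : Function.Injective u) (huu : ∀ i, IsUnit (u i))
    (a : Fin 4 → R₁) (ha : Function.Injective a)
    (ham : ∀ i, a i ∈ IsLocalRing.maximalIdeal R₁) (ha0 : ∀ i, a i ≠ 0)
    (A B : Fin 5 → R₁ × ZMod 2)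
    (hA : A = fun i => (u i, 0))
    (hB : B = ![(0, 1), (a 0, 1), (a 1, 1), (a 2, 1), (a 3, 1)]) :
    Function.Injective A ∧ Function.Injective B ∧ (∀ i j, A i ≠ B j) ∧
      ∀ i j, cozeroAdj (A i) (B j) := by
  have hB2 : ∃ b : Fin 5 → R₁, Function.Injective b ∧
      (∀ i, b i ∈ IsLocalRing.maximalIdeal R₁) ∧ ∀ i, B i = (b i, 1) := by
    refine ⟨Fin.cons 0 a, ?_, ?_, ?_⟩
    · rw [Fin.cons_injective_iff]
      refine ⟨?_, ha⟩
      rintro ⟨i, hi⟩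
      exact ha0 i hi
    · intro i
      refine Fin.cases ?_ ?_ i
      · simp
      · intro j
        simpa using ham j
    · intro i
      subst hB
      fin_cases i <;> rfl
  obtain ⟨b, hb, hbm, hBb⟩ := hB2
  have hbu : ∀ j, ¬ IsUnit (b j) := fun j => (IsLocalRing.mem_maximalIdeal _).1 (hbm j)
  have h01 : (0 : ZMod 2) ≠ 1 := by decide
  have hAi : ∀ i, A i = (u i, 0) := fun i => by rw [hA]
  refine ⟨?_, ?_, ?_, ?_⟩
  · intro i j h
    rw [hAi, hAi] at h
    exact hu (congrArg Prod.fst h)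
  · intro i j h
    rw [hBb, hBb] at h
    exact hb (congrArg Prod.fst h)
  · intro i j h
    rw [hAi, hBb] at h
    exact h01 (congrArg Prod.snd h)
  · intro i j
    rw [hAi, hBb]
    refine ⟨⟨?_, ?_⟩, ⟨?_, ?_⟩, ?_, ?_⟩
    · intro h
      exact (huu i).ne_zero (congrArg Prod.fst h)
    · intro h
      exact not_isUnit_zero (Prod.isUnit_iff.1 h).2
    · intro h
      exact h01 (congrArg Prod.snd h).symm
    · intro h
      exact hbu j (Prod.isUnit_iff.1 h).1
    · intro h
      obtain ⟨c, hc⟩ := Ideal.mem_span_singleton'.1 h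
      have h1 : c.1 * b j = u i := congrArg Prod.fst hc
      exact hbu j (isUnit_of_mul_isUnit_right (h1 ▸ huu i))
    · intro h
      obtain ⟨c, hc⟩ := Ideal.mem_span_singleton'.1 h
      have h1 : c.2 * 0 = 1 := congrArg Prod.snd hc
      rw [mul_zero] at h1
      exact h01 h1
end

section
/- Let $R_1$ be a commutative local ring with unity having eight distinct units $u_1, \ldots, u_8$ and three distinct non-zero elements $a_1, a_2, a_3$ of its maximal ideal. Then $\Gamma'(R_1 \times \mathbb{Z}_2)$ contains $K_{8,4}$ as a subgraph, with parts $\{(u_i,0) : 1 \leq i \leq 8\}$ and $\{(0,1), (a_1,1), (a_2,1), (a_3,1)\}$. -/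
/-- Let `R₁` be a commutative local ring with eight distinct units `u₁, …, u₈`
and three distinct non-zero elements `a₁, a₂, a₃` of its maximal ideal.  Then
`Γ'(R₁ × ℤ₂)` contains `K_{8,4}` as a subgraph with the indicated parts. -/
theorem stmt11 (R₁ : Type*) [CommRing R₁] [IsLocalRing R₁]
    (u : Fin 8 → R₁) (hu : Function.Injective u) (huu : ∀ i, IsUnit (u i))
    (a : Fin 3 → R₁) (ha : Function.Injective a)
    (ham : ∀ i, a i ∈ IsLocalRing.maximalIdeal R₁) (ha0 : ∀ i, a i ≠ 0)
    (A : Fin 8 → R₁ × ZMod 2) (B : Fin 4 → R₁ × ZMod 2)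
    (hA : A = fun i => (u i, 0))
    (hB : B = ![(0, 1), (a 0, 1), (a 1, 1), (a 2, 1)]) :
    Function.Injective A ∧ Function.Injective B ∧ (∀ i j, A i ≠ B j) ∧
      ∀ i j, cozeroAdj (A i) (B j) := by
  have hB2 : ∀ j, (B j).2 = 1 := by
    intro j; subst hB; fin_cases j <;> rfl
  have hB1 : ∀ j, (B j).1 ∈ IsLocalRing.maximalIdeal R₁ := by
    intro j; subst hB
    fin_cases j
    · exact Ideal.zero_mem _
    · exact ham 0
    · exact ham 1
    · exact ham 2
  have h10 : (1 : ZMod 2) ≠ 0 := by decide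
  have hA1 : ∀ i, IsUnit (A i).1 := by
    intro i; subst hA; exact huu i
  have hA2 : ∀ i, (A i).2 = 0 := by
    intro i; subst hA; rfl
  refine ⟨?_, ?_, ?_, ?_⟩
  · intro i j h
    subst hA
    exact hu (congrArg Prod.fst h)
  · have h01 : a 0 ≠ a 1 := fun h => absurd (ha h) (by decide)
    have h02 : a 0 ≠ a 2 := fun h => absurd (ha h) (by decide)
    have h12 : a 1 ≠ a 2 := fun h => absurd (ha h) (by decide)
    have z0 := ha0 0
    have z1 := ha0 1
    have z2 := ha0 2
    intro i j h
    have h1 := congrArg Prod.fst h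
    subst hB
    fin_cases i <;> fin_cases j <;> first
      | rfl
      | exact absurd h1 z0
      | exact absurd h1.symm z0
      | exact absurd h1 z1
      | exact absurd h1.symm z1
      | exact absurd h1 z2
      | exact absurd h1.symm z2
      | exact absurd h1 h01
      | exact absurd h1.symm h01
      | exact absurd h1 h02
      | exact absurd h1.symm h02
      | exact absurd h1 h12
      | exact absurd h1.symm h12
  · intro i j h
    have h2 := congrArg Prod.snd h
    rw [hA2, hB2] at h2
    exact h10 h2.symm
  · intro i j
    have hnu : ¬ IsUnit (B j).1 := (IsLocalRing.mem_maximalIdeal _).1 (hB1 j)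
    refine ⟨⟨?_, ?_⟩, ⟨?_, ?_⟩, ?_, ?_⟩
    · intro h
      have := hA1 i
      rw [h] at this
      exact not_isUnit_zero this
    · intro h
      have := (Prod.isUnit_iff.1 h).2
      rw [hA2] at this
      exact not_isUnit_zero this
    · intro h
      have := hB2 j
      rw [h] at this
      exact h10 this.symm
    · intro h
      exact hnu (Prod.isUnit_iff.1 h).1
    · intro h
      obtain ⟨c, hc⟩ := Ideal.mem_span_singleton.1 h
      have h1 := congrArg Prod.fst hc
      have h3 := hA1 i
      rw [h1] at h3
      exact hnu (isUnit_of_mul_isUnit_left h3)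
    · intro h
      obtain ⟨c, hc⟩ := Ideal.mem_span_singleton.1 h
      have h1 := congrArg Prod.snd hc
      rw [Prod.snd_mul, hA2, hB2, zero_mul] at h1
      exact h10 h1
end

section
/- Let $R_1$ be a commutative local ring with unity whose maximal ideal is principal, generated by $a$, with nilpotent index $8$ (i.e., $a^7 \neq 0$ and $a^8 = 0$), and let $F$ be a field. Then $\Gamma_r(R_1 \times F)$ contains $K_{3,3}$ as a subgraph, with parts $\{(a^6)\times F,\ (a^7)\times F,\ (0)\times F\}$ and $\{R_1\times(0),\ (a^4)\times(0),\ (a^5)\times(0)\}$. -/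
theorem aux_adj {R F : Type*} [CommRing R] [Field F] (x y : R) (h : ¬ x ∣ y) :
    redCozeroAdj (Ideal.span {(x, (1 : F))}) (Ideal.span {(y, (0 : F))}) := by
  have h1 : ¬ Ideal.span {(x, (1 : F))} ≤ Ideal.span {(y, (0 : F))} := by
    rw [Ideal.span_singleton_le_span_singleton, prod_dvd_iff]
    simp
  have h2 : ¬ Ideal.span {(y, (0 : F))} ≤ Ideal.span {(x, (1 : F))} := by
    rw [Ideal.span_singleton_le_span_singleton, prod_dvd_iff]
    simp [h]
  refine ⟨⟨⟨_, rfl⟩, ?_, ?_⟩, ⟨⟨_, rfl⟩, ?_, ?_⟩, ?_, fun e => h1 e.le, fun e => h2 e.le⟩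
  · intro e; exact h1 (e ▸ bot_le)
  · intro e; exact h2 (e ▸ le_top)
  · intro e; exact h2 (e ▸ bot_le)
  · intro e; exact h1 (e ▸ le_top)
  · intro e; exact h1 e.le

theorem aux_ne {R F : Type*} [CommRing R] [Field F] (x y : R) (u : F) (h : ¬ x ∣ y) :
    Ideal.span {(x, u)} ≠ Ideal.span {(y, u)} := by
  intro e
  have := e.ge
  rw [Ideal.span_singleton_le_span_singleton, prod_dvd_iff] at this
  exact h this.1

theorem aux_dvd {R : Type*} [CommRing R] (a : R) (h7 : a ^ 7 ≠ 0) (h8 : a ^ 8 = 0)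
    (m n : ℕ) (hm : m ≤ 7) (hn : m < n) : ¬ a ^ n ∣ a ^ m := by
  rintro ⟨c, hc⟩
  apply h7
  obtain ⟨k, rfl⟩ : ∃ k, n = m + 1 + k := ⟨n - (m + 1), by omega⟩
  obtain ⟨l, hl⟩ : ∃ l, 7 = m + l := ⟨7 - m, by omega⟩
  calc a ^ 7 = a ^ m * a ^ l := by rw [← pow_add, ← hl]
    _ = a ^ (m + l + 1) * (a ^ k * c) := by rw [hc]; ring
    _ = 0 := by rw [← hl, h8, zero_mul]

/-- Let `R₁` be a commutative local ring whose maximal ideal is principal,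
generated by `a`, with nilpotent index `8`, and let `F` be a field.  Then
`Γ_r(R₁ × F)` contains `K_{3,3}` as a subgraph with parts
`{(a⁶)×F, (a⁷)×F, (0)×F}` and `{R₁×(0), (a⁴)×(0), (a⁵)×(0)}`. -/
theorem stmt12 (R₁ F : Type*) [CommRing R₁] [IsLocalRing R₁] [Field F]
    (a : R₁) (hmax : IsLocalRing.maximalIdeal R₁ = Ideal.span {a})
    (h7 : a ^ 7 ≠ 0) (h8 : a ^ 8 = 0)
    (A B : Fin 3 → Ideal (R₁ × F))
    (hA : A = ![Ideal.span {(a ^ 6, (1 : F))}, Ideal.span {(a ^ 7, (1 : F))},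
                Ideal.span {((0 : R₁), (1 : F))}])
    (hB : B = ![Ideal.span {((1 : R₁), (0 : F))}, Ideal.span {(a ^ 4, (0 : F))},
                Ideal.span {(a ^ 5, (0 : F))}]) :
    Function.Injective A ∧ Function.Injective B ∧ (∀ i j, A i ≠ B j) ∧
      ∀ i j, redCozeroAdj (A i) (B j) := by
  have D := aux_dvd a h7 h8
  have D0 : ∀ m, m ≤ 7 → ¬ (0 : R₁) ∣ a ^ m := fun m hm => by
    rw [← h8]; exact D m 8 hm (by omega)
  have adj : ∀ i j, redCozeroAdj (A i) (B j) := by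
    subst hA hB
    have e : (1 : R₁) = a ^ 0 := (pow_zero a).symm
    rw [e]
    intro i j
    fin_cases i <;> fin_cases j <;> apply aux_adj <;>
      first
      | exact D0 _ (by omega)
      | exact D _ _ (by omega) (by omega)
  refine ⟨?_, ?_, fun i j => (adj i j).2.2.1, adj⟩
  · have h01 : A 0 ≠ A 1 := by
      subst hA; exact (aux_ne _ _ _ (D 6 7 (by omega) (by omega))).symm
    have h02 : A 0 ≠ A 2 := by
      subst hA; exact (aux_ne _ _ _ (D0 6 (by omega))).symm
    have h12 : A 1 ≠ A 2 := by
      subst hA; exact (aux_ne _ _ _ (D0 7 (by omega))).symm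
    intro i j hij
    fin_cases i <;> fin_cases j <;> first | rfl | (exfalso; simp at hij; grind)
  · have h01 : B 0 ≠ B 1 := by
      subst hB; exact (aux_ne _ _ _ (by simpa using D 0 4 (by omega) (by omega))).symm
    have h02 : B 0 ≠ B 2 := by
      subst hB; exact (aux_ne _ _ _ (by simpa using D 0 5 (by omega) (by omega))).symm
    have h12 : B 1 ≠ B 2 := by
      subst hB; exact (aux_ne _ _ _ (D 4 5 (by omega) (by omega))).symm
    intro i j hij
    fin_cases i <;> fin_cases j <;> first | rfl | (exfalso; simp at hij; grind)
end

section
/- Let $R_1, R_2$ be commutative local rings with unity whose maximal ideals are principal, generated by $a$ and $b$ respectively, with nilpotent indices $4$ and $3$ (i.e., $a^3 \neq 0$, $a^4 = 0$, $b^2 \neq 0$, $b^3 = 0$). Then $\Gamma_r(R_1 \times R_2)$ contains $K_{5,4}$ as a subgraph, with parts $\{(a^3)\times R_2,\ (a^3)\times(b),\ (0)\times(b),\ (a^2)\times(b),\ (0)\times R_2\}$ and $\{R_1\times(0),\ R_1\times(b^2),\ (a)\times(0),\ (a)\times(b^2)\}$. -/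
theorem aux_dvd_s14 {R : Type*} [CommRing R] {a : R} (ha : IsNilpotent a) {j : ℕ}
    (h0 : a ^ j ≠ 0) {i k : ℕ} (hk : k ≤ j) (hi : k < i) : ¬ a ^ i ∣ a ^ k := by
  intro h
  obtain ⟨c, hc⟩ := (pow_dvd_pow a (Nat.succ_le_of_lt hi)).trans h
  have hu : IsUnit (1 - a * c) :=
    IsNilpotent.isUnit_one_sub ((Commute.all a c).isNilpotent_mul_right ha)
  have hz : a ^ k * (1 - a * c) = 0 := by
    rw [pow_succ] at hc
    linear_combination hc
  have hk0 : a ^ k = 0 := (hu.mul_left_eq_zero).1 hz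
  exact h0 (pow_eq_zero_of_le hk hk0)

theorem aux_le {R S : Type*} [CommRing R] [CommRing S] (x z : R) (y w : S) :
    Ideal.span {(x, y)} ≤ Ideal.span {(z, w)} ↔ z ∣ x ∧ w ∣ y := by
  rw [Ideal.span_singleton_le_span_singleton, prod_dvd_iff]

theorem aux_eq {R S : Type*} [CommRing R] [CommRing S] (x z : R) (y w : S) :
    Ideal.span {(x, y)} = Ideal.span {(z, w)} ↔ (z ∣ x ∧ w ∣ y) ∧ (x ∣ z ∧ y ∣ w) := by
  rw [le_antisymm_iff, aux_le, aux_le]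

theorem aux_adj_s14 {R : Type*} [CommRing R] {I J : Ideal R} (hI : I.IsPrincipal)
    (hJ : J.IsPrincipal) (h1 : ¬ I ≤ J) (h2 : ¬ J ≤ I) : redCozeroAdj I J := by
  refine ⟨⟨hI, ?_, ?_⟩, ⟨hJ, ?_, ?_⟩, ?_, fun h => h1 h.le, fun h => h2 h.le⟩
  · rintro rfl; exact h1 bot_le
  · rintro rfl; exact h2 le_top
  · rintro rfl; exact h2 bot_le
  · rintro rfl; exact h1 le_top
  · rintro rfl; exact h1 le_rfl

/-- Let `R₁, R₂` be commutative local rings whose maximal ideals are principal,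
generated by `a` resp. `b`, with nilpotent indices `4` and `3`.  Then
`Γ_r(R₁ × R₂)` contains `K_{5,4}` as a subgraph with parts
`{(a³)×R₂, (a³)×(b), (0)×(b), (a²)×(b), (0)×R₂}` and
`{R₁×(0), R₁×(b²), (a)×(0), (a)×(b²)}`. -/
theorem stmt14 (R₁ R₂ : Type*) [CommRing R₁] [CommRing R₂]
    [IsLocalRing R₁] [IsLocalRing R₂]
    (a : R₁) (hmaxa : IsLocalRing.maximalIdeal R₁ = Ideal.span {a})
    (ha3 : a ^ 3 ≠ 0) (ha4 : a ^ 4 = 0)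
    (b : R₂) (hmaxb : IsLocalRing.maximalIdeal R₂ = Ideal.span {b})
    (hb2 : b ^ 2 ≠ 0) (hb3 : b ^ 3 = 0)
    (A : Fin 5 → Ideal (R₁ × R₂)) (B : Fin 4 → Ideal (R₁ × R₂))
    (hA : A = ![Ideal.span {(a ^ 3, (1 : R₂))}, Ideal.span {(a ^ 3, b)},
                Ideal.span {((0 : R₁), b)}, Ideal.span {(a ^ 2, b)},
                Ideal.span {((0 : R₁), (1 : R₂))}])
    (hB : B = ![Ideal.span {((1 : R₁), (0 : R₂))}, Ideal.span {((1 : R₁), b ^ 2)},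
                Ideal.span {(a, (0 : R₂))}, Ideal.span {(a, b ^ 2)}]) :
    Function.Injective A ∧ Function.Injective B ∧ (∀ i j, A i ≠ B j) ∧
      ∀ i j, redCozeroAdj (A i) (B j) := by
  have na : IsNilpotent a := ⟨4, ha4⟩
  have nb : IsNilpotent b := ⟨3, hb3⟩
  have a31 : ¬ a ^ 3 ∣ 1 := by simpa using aux_dvd_s14 na ha3 (i := 3) (k := 0) (by simp) (by simp)
  have a21 : ¬ a ^ 2 ∣ 1 := by simpa using aux_dvd_s14 na ha3 (i := 2) (k := 0) (by simp) (by simp)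
  have a11 : ¬ a ∣ 1 := by simpa using aux_dvd_s14 na ha3 (i := 1) (k := 0) (by simp) (by simp)
  have a3a : ¬ a ^ 3 ∣ a := by simpa using aux_dvd_s14 na ha3 (i := 3) (k := 1) (by simp) (by simp)
  have a2a : ¬ a ^ 2 ∣ a := by simpa using aux_dvd_s14 na ha3 (i := 2) (k := 1) (by simp) (by simp)
  have a32 : ¬ a ^ 3 ∣ a ^ 2 := aux_dvd_s14 na ha3 (by simp) (by simp)
  have b21 : ¬ b ^ 2 ∣ 1 := by simpa using aux_dvd_s14 nb hb2 (i := 2) (k := 0) (by simp) (by simp)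
  have b11 : ¬ b ∣ 1 := by simpa using aux_dvd_s14 nb hb2 (i := 1) (k := 0) (by simp) (by simp)
  have b2b : ¬ b ^ 2 ∣ b := by simpa using aux_dvd_s14 nb hb2 (i := 2) (k := 1) (by simp) (by simp)
  have z3 : ¬ (0 : R₁) ∣ a ^ 3 := by rwa [zero_dvd_iff]
  have z2 : ¬ (0 : R₁) ∣ a ^ 2 := fun h => z3 (h.trans (pow_dvd_pow a (by simp)))
  have z1 : ¬ (0 : R₁) ∣ a := fun h => z3 (h.trans (dvd_pow_self a (by simp)))
  have z0 : ¬ (0 : R₁) ∣ 1 := fun h => z3 (h.trans (one_dvd _))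
  have y2 : ¬ (0 : R₂) ∣ b ^ 2 := by rwa [zero_dvd_iff]
  have y1 : ¬ (0 : R₂) ∣ b := fun h => y2 (h.trans (dvd_pow_self b (by simp)))
  have y0 : ¬ (0 : R₂) ∣ 1 := fun h => y2 (h.trans (one_dvd _))
  have hadj : ∀ i j, redCozeroAdj (A i) (B j) := by
    subst hA hB
    intro i j
    apply aux_adj_s14
    · fin_cases i <;> exact ⟨_, rfl⟩
    · fin_cases j <;> exact ⟨_, rfl⟩
    · fin_cases i <;> fin_cases j <;> refine fun h => ?_ <;>
        have h' := (aux_le _ _ _ _).1 h <;> tauto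
    · fin_cases i <;> fin_cases j <;> refine fun h => ?_ <;>
        have h' := (aux_le _ _ _ _).1 h <;> tauto
  refine ⟨?_, ?_, fun i j => (hadj i j).2.2.1, hadj⟩
  · subst hA
    intro i j h
    fin_cases i <;> fin_cases j <;> first
      | rfl
      | (exfalso; have h' := (aux_eq _ _ _ _).1 h; tauto)
  · subst hB
    intro i j h
    fin_cases i <;> fin_cases j <;> first
      | rfl
      | (exfalso; have h' := (aux_eq _ _ _ _).1 h; tauto)
end

section
/- Let $R_1$ be a commutative ring with unity containing elements $a_1, a_2, a_3, a_4$ whose principal ideals are pairwise incomparable, i.e., $(a_i) \not\subseteq (a_j)$ for all distinct $i, j \in \{1,2,3,4\}$, and let $F$ be a field. Then $\Gamma_r(R_1 \times F)$ contains the complete graph $K_5$ as a subgraph, on the five vertices $(a_1)\times(0),\ (a_2)\times(0),\ (a_3)\times(0),\ (a_4)\times(0),\ (0)\times F$. -/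
/-- Let `R₁` be a commutative ring containing `a₁, a₂, a₃, a₄` whose principal
ideals are pairwise incomparable, and let `F` be a field.  Then `Γ_r(R₁ × F)`
contains `K₅` as a subgraph on the vertices
`(a₁)×(0), (a₂)×(0), (a₃)×(0), (a₄)×(0), (0)×F`. -/
theorem stmt16 (R₁ F : Type*) [CommRing R₁] [Field F]
    (a : Fin 4 → R₁)
    (hinc : ∀ i j, i ≠ j → ¬ Ideal.span {a i} ≤ Ideal.span {a j})
    (v : Fin 5 → Ideal (R₁ × F))
    (hv : v = ![Ideal.span {(a 0, (0 : F))}, Ideal.span {(a 1, (0 : F))},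
                Ideal.span {(a 2, (0 : F))}, Ideal.span {(a 3, (0 : F))},
                Ideal.span {((0 : R₁), (1 : F))}]) :
    Function.Injective v ∧ ∀ i j, i ≠ j → redCozeroAdj (v i) (v j) := by
  have h0 : ∀ i, a i ≠ 0 := by
    intro i hi
    obtain ⟨j, hj⟩ := exists_ne i
    apply hinc i j hj.symm
    simp [hi]
  have hd : ∀ i j, i ≠ j → ¬ a j ∣ a i := fun i j hij h =>
    hinc i j hij (Ideal.span_singleton_le_span_singleton.mpr h)
  have h1 : ∀ i j, i ≠ j → ¬ Ideal.span {(a i, (0 : F))} ≤ Ideal.span {(a j, (0 : F))} := by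
    intro i j hij h
    rw [Ideal.span_singleton_le_span_singleton, prod_dvd_iff] at h
    exact hd i j hij h.1
  have h2 : ∀ i, ¬ Ideal.span {(a i, (0 : F))} ≤ Ideal.span {((0 : R₁), (1 : F))} := by
    intro i h
    rw [Ideal.span_singleton_le_span_singleton, prod_dvd_iff] at h
    exact h0 i (zero_dvd_iff.mp h.1)
  have h3 : ∀ i, ¬ Ideal.span {((0 : R₁), (1 : F))} ≤ Ideal.span {(a i, (0 : F))} := by
    intro i h
    rw [Ideal.span_singleton_le_span_singleton, prod_dvd_iff] at h
    exact one_ne_zero (zero_dvd_iff.mp h.2)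
  have e1 : ∀ i : Fin 4, v i.castSucc = Ideal.span {(a i, (0 : F))} := by
    intro i
    rw [hv]
    fin_cases i <;> rfl
  have e2 : v (Fin.last 4) = Ideal.span {((0 : R₁), (1 : F))} := by
    rw [hv]
    rfl
  clear hv
  have key : ∀ i j, i ≠ j → ¬ v i ≤ v j := by
    intro i j hij
    rcases Fin.eq_castSucc_or_eq_last i with ⟨i, rfl⟩ | rfl <;>
      rcases Fin.eq_castSucc_or_eq_last j with ⟨j, rfl⟩ | rfl
    · rw [e1, e1]
      exact h1 i j (fun h => hij (by rw [h]))
    · rw [e1, e2]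
      exact h2 i
    · rw [e1, e2]
      exact h3 j
    · exact absurd rfl hij
  have hp : ∀ i, (v i).IsPrincipal := by
    intro i
    rcases Fin.eq_castSucc_or_eq_last i with ⟨i, rfl⟩ | rfl
    · rw [e1]
      exact ⟨_, rfl⟩
    · rw [e2]
      exact ⟨_, rfl⟩
  have hvert : ∀ i, (v i).IsPrincipal ∧ v i ≠ ⊥ ∧ v i ≠ ⊤ := by
    intro i
    obtain ⟨j, hj⟩ := exists_ne i
    exact ⟨hp i, fun h => key i j hj.symm (h ▸ bot_le), fun h => key j i hj (h ▸ le_top)⟩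
  refine ⟨fun i j h => ?_, fun i j hij => ⟨hvert i, hvert j, fun h => key i j hij h.le,
    fun h => key i j hij h.le, fun h => key j i hij.symm h.le⟩⟩
  by_contra hij
  exact key i j hij h.le
end

section
/- Let $F_1, F_2, F_3, F_4$ be fields and let $R = F_1 \times F_2 \times F_3 \times F_4$. In $\Gamma_r(R)$, consider the vertices $x_1 = (0)\times(1)\times(0)\times(1)$, $x_2 = (0)\times(1)\times(0)\times(0)$, $x_3 = (0)\times(1)\times(1)\times(1)$, $x_4 = (0)\times(1)\times(1)\times(0)$, $x_5 = (0)\times(0)\times(1)\times(1)$, $x_6 = (1)\times(0)\times(0)\times(1)$, $x_7 = (1)\times(0)\times(0)\times(0)$, $x_8 = (1)\times(0)\times(1)\times(1)$, $x_9 = (1)\times(0)\times(1)\times(0)$, $x_{10} = (1)\times(1)\times(0)\times(0)$, $x_{11} = (0)\times(0)\times(1)\times(0)$, $x_{12} = (1)\times(1)\times(0)\times(1)$, where $(1)$ denotes the full factor and $(0)$ the zero ideal of that factor. Then $x_i$ is adjacent to $x_j$ for every $i \in \{1,\ldots,5\}$ and $j \in \{6,\ldots,10\}$ except for the pairs $(x_2,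 x_{10})$ and $(x_5, x_8)$, and moreover $x_2 \sim x_{11}$, $x_{11} \sim x_{10}$, $x_5 \sim x_{12}$, and $x_{12} \sim x_8$; in particular, $\Gamma_r(F_1 \times F_2 \times F_3 \times F_4)$ contains a subdivision of $K_{5,5}$ as a subgraph. -/
theorem adj_of_not_dvd {R : Type*} [CommRing R] (a b : R) (h : ¬ a ∣ b) (h' : ¬ b ∣ a) :
    redCozeroAdj (Ideal.span {a}) (Ideal.span {b}) := by
  have k : ¬ Ideal.span {b} ≤ Ideal.span {a} := by
    rwa [Ideal.span_singleton_le_span_singleton]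
  have k' : ¬ Ideal.span {a} ≤ Ideal.span {b} := by
    rwa [Ideal.span_singleton_le_span_singleton]
  refine ⟨⟨⟨a, rfl⟩, ?_, ?_⟩, ⟨⟨b, rfl⟩, ?_, ?_⟩, ?_, fun e => k' e.le, fun e => k e.le⟩
  · intro e; exact k' (e ▸ bot_le)
  · intro e; exact k (e ▸ le_top)
  · intro e; exact k (e ▸ bot_le)
  · intro e; exact k' (e ▸ le_top)
  · intro e; exact k e.ge

/-- Let `F₁, F₂, F₃, F₄` be fields.  In `Γ_r(F₁ × F₂ × F₃ × F₄)`, with the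
vertices `x₁, …, x₁₂` listed below (written as `A = ![x₁, …, x₅]`,
`B = ![x₆, …, x₁₀]`, `C₁ = x₁₁`, `C₂ = x₁₂`), `xᵢ ∼ xⱼ` for all
`i ∈ {1,…,5}`, `j ∈ {6,…,10}` except for the pairs `(x₂, x₁₀)` and
`(x₅, x₈)`, and moreover `x₂ ∼ x₁₁ ∼ x₁₀` and `x₅ ∼ x₁₂ ∼ x₈`
(so that `Γ_r(F₁ × F₂ × F₃ × F₄)` contains a subdivision of `K_{5,5}`). -/
theorem stmt19 (F₁ F₂ F₃ F₄ : Type*) [Field F₁] [Field F₂] [Field F₃] [Field F₄]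
    (A B : Fin 5 → Ideal (F₁ × F₂ × F₃ × F₄))
    (C₁ C₂ : Ideal (F₁ × F₂ × F₃ × F₄))
    (hA : A = ![Ideal.span {((0 : F₁), (1 : F₂), (0 : F₃), (1 : F₄))},
                Ideal.span {((0 : F₁), (1 : F₂), (0 : F₃), (0 : F₄))},
                Ideal.span {((0 : F₁), (1 : F₂), (1 : F₃), (1 : F₄))},
                Ideal.span {((0 : F₁), (1 : F₂), (1 : F₃), (0 : F₄))},
                Ideal.span {((0 : F₁), (0 : F₂), (1 : F₃), (1 : F₄))}])
    (hB : B = ![Ideal.span {((1 : F₁), (0 : F₂), (0 : F₃), (1 : F₄))},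
                Ideal.span {((1 : F₁), (0 : F₂), (0 : F₃), (0 : F₄))},
                Ideal.span {((1 : F₁), (0 : F₂), (1 : F₃), (1 : F₄))},
                Ideal.span {((1 : F₁), (0 : F₂), (1 : F₃), (0 : F₄))},
                Ideal.span {((1 : F₁), (1 : F₂), (0 : F₃), (0 : F₄))}])
    (hC₁ : C₁ = Ideal.span {((0 : F₁), (0 : F₂), (1 : F₃), (0 : F₄))})
    (hC₂ : C₂ = Ideal.span {((1 : F₁), (1 : F₂), (0 : F₃), (1 : F₄))}) :
    (∀ i j : Fin 5, ¬ ((i = 1 ∧ j = 4) ∨ (i = 4 ∧ j = 2)) →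
      redCozeroAdj (A i) (B j)) ∧
    redCozeroAdj (A 1) C₁ ∧ redCozeroAdj C₁ (B 4) ∧
    redCozeroAdj (A 4) C₂ ∧ redCozeroAdj C₂ (B 2) := by
  subst hA hB hC₁ hC₂
  refine ⟨?_, ?_, ?_, ?_, ?_⟩
  · intro i j hij
    fin_cases i <;> fin_cases j <;>
      first
      | (exfalso; revert hij; decide)
      | (apply adj_of_not_dvd <;> simp [prod_dvd_iff])
  all_goals (apply adj_of_not_dvd <;> simp [prod_dvd_iff])
end
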